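/- Erdős–Kac theorem for the number of prime divisors counted with multiplicity: for every real x, (1/n)·#{m : 1 ≤ m ≤ n, Ω(m) - ln ln n ≤ x·√(ln ln n)} → Φ(x) as n → ∞, where Φ is the standard normal cumulative distribution function. -/

import Mathlib

namespace EK
open Finset Filter

/-- Primes up to `n`. -/
def P (n : ℕ) : Finset ℕ := (range (n + 1)).filter Nat.Prime

lemma mem_P {n p : ℕ} : p ∈ P n ↔ p ≤ n ∧ p.Prime := by
  simp [P, Nat.lt_succ_iff]

lemma sum_P_succ (f : ℕ → ℝ) (n : ℕ) :
    ∑ p ∈ P (n + 1), f p = ∑ p ∈ P n, f p + if (n + 1).Prime then f (n + 1) else 0 := by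
  simp only [P, sum_filter]
  rw [sum_range_succ]

lemma supp_sub {n m : ℕ} (h : ∀ p, p.Prime → p ∣ m → p ≤ n) : m.factorization.support ⊆ P n := by
  intro p hp
  rw [Nat.support_factorization, Nat.mem_primeFactors] at hp
  exact mem_P.2 ⟨h p hp.1 hp.2.1, hp.1⟩

lemma Omega_eq {n m : ℕ} (h : ∀ p, p.Prime → p ∣ m → p ≤ n) :
    m.primeFactorsList.length = ∑ p ∈ P n, m.factorization p := by
  rw [← ArithmeticFunction.cardFactors_apply, ArithmeticFunction.cardFactors_eq_sum_factorization]
  exact Finsupp.sum_of_support_subset _ (supp_sub h) _ (by simp)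

lemma fact_dvd {n p : ℕ} (hp : p.Prime) (h : p ∣ n.factorial) : p ≤ n :=
  (hp.dvd_factorial).1 h

lemma log_fact (n : ℕ) :
    Real.log (n.factorial) = ∑ p ∈ P n, (n.factorial.factorization p : ℝ) * Real.log p := by
  conv_lhs => rw [← Nat.prod_factorization_pow_eq_self (Nat.factorial_ne_zero n)]
  rw [Finsupp.prod_of_support_subset _ (supp_sub fun p hp h => fact_dvd hp h) _ (by simp)]
  push_cast
  rw [Real.log_prod]
  · simp [Real.log_pow]
  · intro p hp
    have := (mem_P.1 hp).2.pos
    positivity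

lemma v_lower {n p : ℕ} (hp : p.Prime) : n / p ≤ n.factorial.factorization p := by
  rw [Nat.factorization_factorial hp (b := Nat.log p n + 2) (by omega)]
  have := single_le_sum (f := fun i => n / p ^ i) (s := Ico 1 (Nat.log p n + 2))
    (fun i _ => Nat.zero_le _) (a := 1) (by simp)
  simpa using this

lemma v_upper {n p : ℕ} (hp : p.Prime) :
    (n.factorial.factorization p : ℝ) ≤ n / (p - 1) := by
  haveI : Fact p.Prime := ⟨hp⟩
  have h := sub_one_mul_padicValNat_factorial (p := p) n
  rw [← Nat.factorization_def _ hp] at h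
  have h2 : (p - 1) * n.factorial.factorization p ≤ n := by omega
  have h3 : ((p - 1 : ℕ) : ℝ) * n.factorial.factorization p ≤ n := by exact_mod_cast h2
  rw [Nat.cast_sub hp.one_le, Nat.cast_one] at h3
  have : (1:ℝ) < p := by exact_mod_cast hp.one_lt
  rw [le_div_iff₀ (by linarith)]
  linarith

lemma div_lower (n p : ℕ) (hp : 0 < p) : (n : ℝ) / p - 1 ≤ ((n / p : ℕ) : ℝ) := by
  have := Nat.lt_div_mul_add (a := n) hp
  have h : (n:ℝ) < (n / p : ℕ) * p + p := by exact_mod_cast this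
  have hp' : (0:ℝ) < p := by exact_mod_cast hp
  rw [sub_le_iff_le_add, div_le_iff₀ hp']
  nlinarith

lemma theta_bound (n : ℕ) : ∑ p ∈ P n, Real.log p ≤ Real.log 4 * n := by
  have := Chebyshev.theta_le_log4_mul_x (x := n) (by positivity)
  rw [Chebyshev.theta_eq_sum_Icc] at this
  convert this using 2
  ext p; simp [P, Nat.lt_succ_iff]

/-- Bounded sums. -/
lemma sum_bdd1 : ∃ C : ℝ, 0 ≤ C ∧ ∀ n : ℕ, ∑ p ∈ P n, Real.log p / (p * (p - 1)) ≤ C := by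
  have hs : Summable (fun n : ℕ => 4 * ((n:ℝ) ^ (3/2:ℝ))⁻¹) :=
    (Real.summable_nat_rpow_inv.2 (by norm_num)).mul_left 4
  refine ⟨∑' n : ℕ, 4 * ((n:ℝ) ^ (3/2:ℝ))⁻¹, tsum_nonneg (fun n => by positivity), fun n => ?_⟩
  refine le_trans (sum_le_sum fun p hp => ?_) (hs.sum_le_tsum (P n) (fun n _ => by positivity))
  have hp2 : (2:ℝ) ≤ p := by exact_mod_cast (mem_P.1 hp).2.two_le
  have h1 := Real.log_le_rpow_div (x := p) (ε := 1/2) (by positivity) (by norm_num)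
  have hpp : (0:ℝ) < p := by linarith
  have h2 : ((p:ℝ) ^ (3/2:ℝ)) = p ^ (1/2:ℝ) * p := by
    rw [← Real.rpow_add_one hpp.ne']; norm_num
  have h3 : (p:ℝ) ^ (1/2:ℝ) * (p:ℝ) ^ (1/2:ℝ) = p := by
    rw [← Real.rpow_add hpp]; norm_num
  have h4 : 0 < (p:ℝ) ^ (1/2:ℝ) := by positivity
  rw [h2, ← div_eq_mul_inv, div_le_div_iff₀ (by nlinarith) (by positivity)]
  generalize (p:ℝ) ^ (1/2:ℝ) = s at *
  have h5 : Real.log p ≤ 2 * s := by linarith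
  calc Real.log p * (s * p) ≤ 2 * s * (s * p) := by gcongr
    _ = 2 * (s * s) * p := by ring
    _ = 2 * p * p := by rw [h3]
    _ ≤ 4 * (p * (p - 1)) := by nlinarith

lemma sum_bdd2 : ∃ C : ℝ, 0 ≤ C ∧ ∀ n : ℕ, ∑ p ∈ P n, 1 / ((p:ℝ) * (p - 1)) ≤ C := by
  have hs : Summable (fun n : ℕ => 2 * ((n:ℝ) ^ 2)⁻¹) :=
    (Real.summable_nat_pow_inv.2 (by norm_num)).mul_left 2
  refine ⟨∑' n : ℕ, 2 * ((n:ℝ) ^ 2)⁻¹, tsum_nonneg (fun n => by positivity), fun n => ?_⟩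
  refine le_trans (sum_le_sum fun p hp => ?_) (hs.sum_le_tsum (P n) (fun n _ => by positivity))
  have hp2 : (2:ℝ) ≤ p := by exact_mod_cast (mem_P.1 hp).2.two_le
  rw [← div_eq_mul_inv, div_le_div_iff₀ (by nlinarith) (by positivity)]
  nlinarith

/-- Mertens' first theorem. -/
lemma mertens1 : ∃ C : ℝ, 0 ≤ C ∧ ∀ n : ℕ, 1 ≤ n →
    |∑ p ∈ P n, Real.log p / p - Real.log n| ≤ C := by
  obtain ⟨C, hC, h⟩ := sum_bdd1
  have hl4 : 0 ≤ Real.log 4 := Real.log_nonneg (by norm_num)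
  refine ⟨C + 1 + Real.log 4, by positivity, fun n hn => ?_⟩
  have hn' : (1:ℝ) ≤ n := by exact_mod_cast hn
  have hf := log_fact n
  have hfpos : (0:ℝ) < n.factorial := by exact_mod_cast n.factorial_pos
  have up : Real.log n.factorial ≤ n * Real.log n := by
    rw [← Real.log_pow]
    apply Real.log_le_log hfpos
    exact_mod_cast Nat.factorial_le_pow n
  have lo : n * Real.log n - n ≤ Real.log n.factorial := by
    have := Real.pow_div_factorial_le_exp (x := n) (by positivity) n
    have h2 := Real.log_le_log (by positivity) this
    rw [Real.log_exp, Real.log_div (by positivity) hfpos.ne', Real.log_pow] at h2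
    linarith
  have logp : ∀ p ∈ P n, 0 ≤ Real.log p := fun p hp =>
    Real.log_nonneg (by exact_mod_cast (mem_P.1 hp).2.one_le)
  have a1 : n * ∑ p ∈ P n, Real.log p / p - ∑ p ∈ P n, Real.log p ≤ Real.log n.factorial := by
    rw [hf, mul_sum, ← sum_sub_distrib]
    refine sum_le_sum fun p hp => ?_
    have hpp := (mem_P.1 hp).2
    have h1 := div_lower n p hpp.pos
    have h2 : ((n / p : ℕ):ℝ) ≤ n.factorial.factorization p := by exact_mod_cast v_lower hpp
    have := mul_le_mul_of_nonneg_right (h1.trans h2) (logp p hp)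
    calc _ = ((n:ℝ) / p - 1) * Real.log p := by ring
      _ ≤ _ := this
  have a2 : Real.log n.factorial ≤
      n * (∑ p ∈ P n, Real.log p / p + ∑ p ∈ P n, Real.log p / (p * (p - 1))) := by
    rw [hf, ← sum_add_distrib, mul_sum]
    refine sum_le_sum fun p hp => ?_
    have hpp := (mem_P.1 hp).2
    have := mul_le_mul_of_nonneg_right (v_upper (n := n) hpp) (logp p hp)
    refine this.trans (le_of_eq ?_)
    have h1 : (1:ℝ) < p := by exact_mod_cast hpp.one_lt
    have h2 : (p:ℝ) - 1 ≠ 0 := by linarith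
    field_simp
    ring
  have ht := theta_bound n
  have hb := h n
  rw [abs_le]
  constructor
  · have : n * (Real.log n - 1) ≤
      n * (∑ p ∈ P n, Real.log p / p + ∑ p ∈ P n, Real.log p / (p * (p - 1))) := by linarith
    have := le_of_mul_le_mul_left this (by linarith)
    linarith
  · have : n * (∑ p ∈ P n, Real.log p / p) ≤ n * (Real.log n + Real.log 4) := by linarith
    have := le_of_mul_le_mul_left this (by linarith)
    linarith

lemma step {a b e C : ℝ} (ha : 0 < a) (hab : a < b) (hba : b - a ≤ 1) (he : |e| ≤ C) :
    |e * (1 / a - 1 / b) + (b - a) / b - (Real.log b - Real.log a)| ≤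
      (C + 1) * (1 / a - 1 / b) := by
  have hb : 0 < b := ha.trans hab
  have h0 : 0 < 1 / a - 1 / b := sub_pos.2 (one_div_lt_one_div_of_lt ha hab)
  have h1 : (b - a) / b ≤ Real.log b - Real.log a := by
    rw [← Real.log_div hb.ne' ha.ne']
    have := Real.one_sub_inv_le_log_of_pos (x := b / a) (by positivity)
    refine le_trans (le_of_eq ?_) this
    field_simp
  have h2 : Real.log b - Real.log a ≤ (b - a) / a := by
    rw [← Real.log_div hb.ne' ha.ne']
    refine (Real.log_le_sub_one_of_pos (by positivity)).trans (le_of_eq ?_)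
    field_simp
  have h3 : (b - a) / a - (b - a) / b ≤ 1 / a - 1 / b := by
    have : (b - a) / a - (b - a) / b = (b - a) * (1 / a - 1 / b) := by ring
    rw [this]; nlinarith
  have h4 : |e * (1 / a - 1 / b)| ≤ C * (1 / a - 1 / b) := by
    rw [abs_mul, abs_of_pos h0]; gcongr
  rw [abs_le] at *
  constructor <;> linarith [h4.1, h4.2]

/-- Mertens' second theorem, with `O(1)` error. -/
lemma mertens2 : ∃ C : ℝ, 0 ≤ C ∧ ∀ n : ℕ, 2 ≤ n →
    |∑ p ∈ P n, 1 / (p:ℝ) - Real.log (Real.log n)| ≤ C := by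
  obtain ⟨C, hC, h⟩ := mertens1
  set S : ℕ → ℝ := fun n => ∑ p ∈ P n, 1 / (p:ℝ) with hS
  set E : ℕ → ℝ := fun n => ∑ p ∈ P n, Real.log p / p - Real.log n with hE
  set T : ℕ → ℝ := fun n => S n - E n / Real.log n - Real.log (Real.log n) with hT
  have l2 : 0 < Real.log 2 := Real.log_pos (by norm_num)
  have key : ∀ n : ℕ, 2 ≤ n → |T n| ≤ |T 2| + (C + 1) * (1 / Real.log 2 - 1 / Real.log n) := by
    intro n hn
    induction n, hn using Nat.le_induction with
    | base => simp
    | succ n hn ih =>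
      have hn' : (2:ℝ) ≤ n := by exact_mod_cast hn
      have ha : 0 < Real.log n := Real.log_pos (by linarith)
      have hab : Real.log n < Real.log (n + 1 : ℕ) :=
        Real.log_lt_log (by linarith) (by push_cast; linarith)
      have hba : Real.log (n + 1 : ℕ) - Real.log n ≤ 1 := by
        rw [← Real.log_div (by positivity) (by positivity)]
        refine (Real.log_le_sub_one_of_pos (by positivity)).trans ?_
        push_cast
        rw [sub_le_iff_le_add, div_le_iff₀ (by positivity)]
        linarith
      have hSn : S (n + 1) - S n =
          (E (n + 1) - E n + Real.log (n + 1 : ℕ) - Real.log n) / Real.log (n + 1 : ℕ) := by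
        simp only [hS, hE, sum_P_succ]
        have : Real.log (n + 1 : ℕ) ≠ 0 := by linarith
        split_ifs
        · field_simp; ring
        · ring_nf
      have hEn := h n (by omega)
      change |E n| ≤ C at hEn
      have e1 : T (n + 1) = S (n + 1) - E (n + 1) / Real.log (n + 1 : ℕ)
        - Real.log (Real.log (n + 1 : ℕ)) := rfl
      have e2 : T n = S n - E n / Real.log n - Real.log (Real.log n) := rfl
      have hst := step ha hab hba hEn
      have hd : T (n + 1) = T n + (E n * (1 / Real.log n - 1 / Real.log (n + 1 : ℕ)) +
          (Real.log (n + 1 : ℕ) - Real.log n) / Real.log (n + 1 : ℕ) -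
          (Real.log (Real.log (n + 1 : ℕ)) - Real.log (Real.log n))) := by
        rw [e1, e2]
        linear_combination hSn
      rw [hd]
      refine (abs_add_le _ _).trans ?_
      linarith
  refine ⟨|T 2| + (C + 1) * (1 / Real.log 2) + C / Real.log 2, by positivity, fun n hn => ?_⟩
  have hn' : (2:ℝ) ≤ n := by exact_mod_cast hn
  have ha : Real.log 2 ≤ Real.log n := Real.log_le_log (by norm_num) hn'
  have hk := key n hn
  have hEn := h n (by omega)
  change |E n| ≤ C at hEn
  have e2 : S n - Real.log (Real.log n) = T n + E n / Real.log n := by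
    simp only [hT]; ring
  change |S n - Real.log (Real.log n)| ≤ _
  rw [e2]
  refine (abs_add_le _ _).trans ?_
  have h1 : |E n / Real.log n| ≤ C / Real.log 2 := by
    rw [abs_div, abs_of_pos (l2.trans_le ha)]
    gcongr
  have h2 : 0 ≤ (C + 1) * (1 / Real.log n) := by
    have := l2.trans_le ha
    positivity
  linarith

/-- Real-variable version. -/
lemma mertens_real : ∃ C : ℝ, 0 ≤ C ∧ ∀ y : ℝ, 2 ≤ y →
    |∑ p ∈ P ⌊y⌋₊, 1 / (p:ℝ) - Real.log (Real.log y)| ≤ C := by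
  obtain ⟨C, hC, h⟩ := mertens2
  have l2 : 0 < Real.log 2 := Real.log_pos (by norm_num)
  refine ⟨C + Real.log 2, by positivity, fun y hy => ?_⟩
  have hf : 2 ≤ ⌊y⌋₊ := Nat.le_floor (by exact_mod_cast hy)
  have hf' : (2:ℝ) ≤ (⌊y⌋₊ : ℝ) := by exact_mod_cast hf
  have h1 := h _ hf
  have h2 : (⌊y⌋₊:ℝ) ≤ y := Nat.floor_le (by linarith)
  have h3 : y ≤ (⌊y⌋₊:ℝ) ^ 2 := by
    have := (Nat.lt_floor_add_one y).le
    nlinarith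
  have l3 : 0 < Real.log (⌊y⌋₊:ℝ) := Real.log_pos (by linarith)
  have h4 : Real.log (Real.log ⌊y⌋₊) ≤ Real.log (Real.log y) :=
    Real.log_le_log l3 (Real.log_le_log (by linarith) h2)
  have h5 : Real.log (Real.log y) ≤ Real.log 2 + Real.log (Real.log ⌊y⌋₊) := by
    rw [← Real.log_mul (by norm_num) l3.ne']
    apply Real.log_le_log (Real.log_pos (by linarith))
    have := Real.log_le_log (by linarith) h3
    rwa [Real.log_pow] at this
  rw [abs_le] at *
  constructor <;> linarith [h1.1, h1.2]

lemma prod_Icc_fact (n : ℕ) : ∏ m ∈ Icc 1 n, m = n.factorial := by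
  induction n with
  | zero => simp
  | succ n ih => rw [prod_Icc_succ_top (by omega), ih, Nat.factorial_succ, mul_comm]

/-- Number of primes up to `k` dividing `m`. -/
def om (k m : ℕ) : ℕ := ((P k).filter (fun p => p ∣ m)).card

lemma om_le {k m : ℕ} (hm : m ≠ 0) : om k m ≤ m.primeFactorsList.length := by
  refine le_trans (card_le_card ?_) (List.toFinset_card_le m.primeFactorsList)
  intro p hp
  rw [mem_filter] at hp
  rw [List.mem_toFinset, Nat.mem_primeFactorsList hm]
  exact ⟨(mem_P.1 hp.1).2, hp.2⟩

lemma card_mult (n d : ℕ) : ((Icc 1 n).filter (fun m => d ∣ m)).card = n / d := by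
  rw [← Nat.Ioc_filter_dvd_card_eq_div]; rfl

lemma sum_Omega_le (n : ℕ) :
    ∑ m ∈ Icc 1 n, (m.primeFactorsList.length : ℝ) ≤ n * ∑ p ∈ P n, 1 / ((p:ℝ) - 1) := by
  have h1 : ∑ m ∈ Icc 1 n, m.primeFactorsList.length =
      ∑ p ∈ P n, n.factorial.factorization p := by
    calc _ = ∑ m ∈ Icc 1 n, ∑ p ∈ P n, m.factorization p := by
          refine sum_congr rfl fun m hm => Omega_eq fun p hp hd => ?_
          rw [mem_Icc] at hm
          exact (Nat.le_of_dvd (by omega) hd).trans hm.2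
      _ = ∑ p ∈ P n, ∑ m ∈ Icc 1 n, m.factorization p := sum_comm
      _ = _ := by
          refine sum_congr rfl fun p hp => ?_
          rw [← prod_Icc_fact, Nat.factorization_prod]
          · simp
          · intro m hm
            rw [mem_Icc] at hm
            omega
  calc _ = ((∑ m ∈ Icc 1 n, m.primeFactorsList.length : ℕ) : ℝ) := by push_cast; rfl
    _ = ∑ p ∈ P n, (n.factorial.factorization p : ℝ) := by rw [h1]; push_cast; rfl
    _ ≤ ∑ p ∈ P n, (n:ℝ) / ((p:ℝ) - 1) := sum_le_sum fun p hp => v_upper (mem_P.1 hp).2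
    _ = _ := by rw [mul_sum]; simp [div_eq_mul_inv]

lemma sum_om_ge (n k : ℕ) :
    n * ∑ p ∈ P k, 1 / (p:ℝ) - k ≤ ∑ m ∈ Icc 1 n, (om k m : ℝ) := by
  have h1 : ∑ m ∈ Icc 1 n, om k m = ∑ p ∈ P k, n / p := by
    simp only [om, card_filter]
    rw [sum_comm]
    refine sum_congr rfl fun p hp => ?_
    rw [← card_mult, card_filter]
  have h2 : ((P k).card : ℝ) ≤ k := by
    have : P k ⊆ Icc 1 k := fun p hp => by
      rw [mem_P] at hp
      exact mem_Icc.2 ⟨hp.2.one_le, hp.1⟩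
    have := card_le_card this
    rw [Nat.card_Icc] at this
    exact_mod_cast this
  calc _ ≤ n * ∑ p ∈ P k, 1 / (p:ℝ) - (P k).card := by linarith
    _ = ∑ p ∈ P k, ((n:ℝ) / p - 1) := by
        rw [sum_sub_distrib, mul_sum]; simp [div_eq_mul_inv]
    _ ≤ ∑ p ∈ P k, ((n / p : ℕ) : ℝ) := sum_le_sum fun p hp => div_lower n p (mem_P.1 hp).2.pos
    _ = _ := by rw [← Nat.cast_sum, ← Nat.cast_sum, h1]

lemma mean_diff : ∃ C : ℝ, 0 ≤ C ∧ ∀ n k : ℕ, k ≤ n →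
    ∑ m ∈ Icc 1 n, ((m.primeFactorsList.length : ℝ) - om k m) ≤
      n * (∑ p ∈ P n, 1 / (p:ℝ) - ∑ p ∈ P k, 1 / (p:ℝ) + C) := by
  obtain ⟨C, hC, h⟩ := sum_bdd2
  refine ⟨C + 1, by positivity, fun n k hk => ?_⟩
  have h1 := sum_Omega_le n
  have h2 := sum_om_ge n k
  have h3 : ∑ p ∈ P n, 1 / ((p:ℝ) - 1) =
      ∑ p ∈ P n, 1 / (p:ℝ) + ∑ p ∈ P n, 1 / ((p:ℝ) * (p - 1)) := by
    rw [← sum_add_distrib]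
    refine sum_congr rfl fun p hp => ?_
    have h1 : (1:ℝ) < p := by exact_mod_cast (mem_P.1 hp).2.one_lt
    have h2 : (p:ℝ) - 1 ≠ 0 := by linarith
    field_simp
    ring
  have hk' : (k:ℝ) ≤ n := by exact_mod_cast hk
  have h4 := mul_le_mul_of_nonneg_left (h n) (Nat.cast_nonneg (α := ℝ) n)
  rw [sum_sub_distrib]
  rw [h3] at h1
  nlinarith

lemma dvd_prod_iff {s : Finset ℕ} (hs : ∀ p ∈ s, p.Prime) (m : ℕ) :
    (∏ p ∈ s, p) ∣ m ↔ ∀ p ∈ s, p ∣ m :=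
  ⟨fun h p hp => (dvd_prod_of_mem _ hp).trans h,
    fun h => prod_primes_dvd m (fun p hp => (hs p hp).prime) h⟩

lemma min_bound {n d : ℕ} (hn : 0 < n) (hd : 0 < d) {δ : ℝ} (h0 : 0 ≤ δ) (h1 : δ ≤ 1) :
    |((n / d : ℕ) : ℝ) / n - 1 / d| ≤ (n:ℝ) ^ (-δ) * ((d:ℝ) ^ δ / d) := by
  have hn' : (0:ℝ) < n := by exact_mod_cast hn
  have hd' : (0:ℝ) < d := by exact_mod_cast hd
  have e : (n:ℝ) ^ (-δ) * ((d:ℝ) ^ δ / d) = (d / n : ℝ) ^ δ / d := by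
    rw [Real.div_rpow hd'.le hn'.le, Real.rpow_neg hn'.le]; ring
  rw [e]
  rcases le_or_gt n d with h | h
  · have hx : (1:ℝ) ≤ (d / n : ℝ) ^ δ :=
      Real.one_le_rpow (by rw [le_div_iff₀ hn']; simpa using (by exact_mod_cast h : (n:ℝ) ≤ d)) h0
    have hl : ((n / d : ℕ) : ℝ) / n ≤ 1 / d := by
      have := Nat.cast_div_le (α := ℝ) (m := n) (n := d)
      calc _ ≤ ((n:ℝ) / d) / n := by gcongr
        _ = 1 / d := by field_simp
    have h2 : 0 ≤ ((n / d : ℕ) : ℝ) / n := by positivity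
    have h3 : 1 / (d:ℝ) ≤ (d / n : ℝ) ^ δ / d := by gcongr
    rw [abs_le]; constructor <;> linarith
  · have hl : ((n / d : ℕ) : ℝ) / n ≤ 1 / d := by
      have := Nat.cast_div_le (α := ℝ) (m := n) (n := d)
      calc _ ≤ ((n:ℝ) / d) / n := by gcongr
        _ = 1 / d := by field_simp
    have hlo : 1 / (d:ℝ) - 1 / n ≤ ((n / d : ℕ) : ℝ) / n := by
      have := div_lower n d hd
      calc 1 / (d:ℝ) - 1 / n = ((n:ℝ) / d - 1) / n := by field_simp
        _ ≤ _ := by gcongr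
    have hx : (d / n : ℝ) ≤ (d / n : ℝ) ^ δ := by
      have hdn : (d / n : ℝ) ≤ 1 := by
        rw [div_le_one hn']; exact_mod_cast h.le
      conv_lhs => rw [← Real.rpow_one (d / n : ℝ)]
      exact Real.rpow_le_rpow_of_exponent_ge (by positivity) hdn h1
    have h3 : 1 / (n:ℝ) ≤ (d / n : ℝ) ^ δ / d := by
      calc 1 / (n:ℝ) = (d / n : ℝ) / d := by field_simp
        _ ≤ _ := by gcongr
    have h4 : 0 ≤ 1 / (n:ℝ) := by positivity
    rw [abs_le]; constructor <;> linarith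

lemma sieve {n : ℕ} (hn : 0 < n) {Q : Finset ℕ} (hQ : ∀ p ∈ Q, p.Prime) (z : ℂ) {δ : ℝ}
    (h0 : 0 ≤ δ) (h1 : δ ≤ 1) :
    ‖(∑ m ∈ Icc 1 n, ∏ p ∈ Q, (1 + if p ∣ m then z else 0)) / n - ∏ p ∈ Q, (1 + z / p)‖ ≤
      (n:ℝ) ^ (-δ) * ∏ p ∈ Q, (1 + ‖z‖ * ((p:ℝ) ^ δ / p)) := by
  have e1 : ∑ m ∈ Icc 1 n, ∏ p ∈ Q, (1 + if p ∣ m then z else 0) =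
      ∑ s ∈ Q.powerset, z ^ s.card * ((n / ∏ p ∈ s, p : ℕ) : ℂ) := by
    simp only [prod_one_add]
    rw [sum_comm]
    refine sum_congr rfl fun s hs => ?_
    rw [mem_powerset] at hs
    rw [← card_mult, card_filter]
    push_cast
    rw [mul_sum]
    refine sum_congr rfl fun m hm => ?_
    have := dvd_prod_iff (fun p hp => hQ p (hs hp)) m
    by_cases h : (∏ p ∈ s, p) ∣ m
    · rw [if_pos h, prod_congr rfl (fun p hp => if_pos (this.1 h p hp))]
      simp
    · rw [if_neg h, mul_zero]
      rw [this] at h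
      push Not at h
      obtain ⟨p, hp, hpm⟩ := h
      exact prod_eq_zero hp (if_neg hpm)
  have e2 : ∏ p ∈ Q, (1 + z / p) = ∑ s ∈ Q.powerset, z ^ s.card * (1 / ((∏ p ∈ s, p : ℕ) : ℂ)) := by
    rw [prod_one_add]
    refine sum_congr rfl fun s hs => ?_
    simp [prod_mul_distrib, div_eq_mul_inv]
  rw [e1, e2, prod_one_add, sum_div, ← sum_sub_distrib, mul_sum]
  refine (norm_sum_le _ _).trans (sum_le_sum fun s hs => ?_)
  rw [mem_powerset] at hs
  have hpos : 0 < ∏ p ∈ s, p := prod_pos fun p hp => (hQ p (hs hp)).pos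
  have hb := min_bound hn hpos h0 h1
  have e3 : z ^ s.card * ((n / ∏ p ∈ s, p : ℕ) : ℂ) / n - z ^ s.card * (1 / ((∏ p ∈ s, p : ℕ) : ℂ))
      = z ^ s.card * (((((n / ∏ p ∈ s, p : ℕ) : ℝ) / n - 1 / ((∏ p ∈ s, p : ℕ) : ℝ) : ℝ)) : ℂ) := by
    push_cast; ring
  have e4 : ∏ p ∈ s, ‖z‖ * ((p:ℝ) ^ δ / p) =
      ‖z‖ ^ s.card * ((((∏ p ∈ s, p : ℕ) : ℝ)) ^ δ / ((∏ p ∈ s, p : ℕ) : ℝ)) := by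
    rw [prod_mul_distrib, prod_const, prod_div_distrib, Real.finsetProd_rpow _ _ (by intros; positivity)]
    push_cast; rfl
  rw [e3, e4, norm_mul, norm_pow, Complex.norm_real, Real.norm_eq_abs]
  calc _ ≤ ‖z‖ ^ s.card * _ := mul_le_mul_of_nonneg_left hb (by positivity)
    _ = _ := by ring

lemma prod_om (k m : ℕ) (z : ℂ) :
    ∏ p ∈ P k, (1 + if p ∣ m then z else 0) = (1 + z) ^ om k m := by
  rw [om, ← prod_const, prod_filter]
  refine prod_congr rfl fun p _ => ?_
  split_ifs <;> simp

lemma prod_close {ι : Type*} (Q : Finset ι) (f g : ι → ℂ) (hf : ∀ i ∈ Q, ‖f i‖ ≤ 1)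
    (hg : ∀ i ∈ Q, ‖g i‖ ≤ 1) : ‖∏ i ∈ Q, f i - ∏ i ∈ Q, g i‖ ≤ ∑ i ∈ Q, ‖f i - g i‖ := by
  classical
  induction Q using Finset.induction_on with
  | empty => simp
  | insert a s ha ih =>
    rw [prod_insert ha, prod_insert ha, sum_insert ha]
    have ih := ih (fun i hi => hf i (mem_insert_of_mem hi)) (fun i hi => hg i (mem_insert_of_mem hi))
    have e : f a * ∏ i ∈ s, f i - g a * ∏ i ∈ s, g i =
      (f a - g a) * ∏ i ∈ s, f i + g a * (∏ i ∈ s, f i - ∏ i ∈ s, g i) := by ring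
    rw [e]
    refine (norm_add_le _ _).trans ?_
    rw [norm_mul, norm_mul]
    have h1 : ‖∏ i ∈ s, f i‖ ≤ 1 := by
      rw [norm_prod]
      exact prod_le_one (fun _ _ => norm_nonneg _) (fun i hi => hf i (mem_insert_of_mem hi))
    have h2 := hg a (mem_insert_self a s)
    have := mul_le_mul_of_nonneg_left h1 (norm_nonneg (f a - g a))
    have := mul_le_mul_of_nonneg_right h2 (norm_nonneg (∏ i ∈ s, f i - ∏ i ∈ s, g i))
    linarith

/-- `∏ (1 + z/p)` versus `exp (z ∑ 1/p)` for `z = e^{iθ} - 1`. -/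
lemma prod_exp : ∃ C : ℝ, 0 ≤ C ∧ ∀ (k : ℕ) (θ : ℝ),
    ‖∏ p ∈ P k, (1 + (Complex.exp (Complex.I * θ) - 1) / p) -
      Complex.exp ((Complex.exp (Complex.I * θ) - 1) * (∑ p ∈ P k, 1 / (p:ℝ) : ℝ))‖ ≤ C * θ ^ 2 := by
  obtain ⟨C, hC, h⟩ := sum_bdd2
  refine ⟨C, hC, fun k θ => ?_⟩
  set w := Complex.exp (Complex.I * θ) with hw
  have hw1 : ‖w‖ = 1 := by rw [hw, mul_comm]; exact Complex.norm_exp_ofReal_mul_I θ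
  have hz : ‖w - 1‖ ≤ |θ| := Real.norm_exp_I_mul_ofReal_sub_one_le
  have hz2 : ‖w - 1‖ ≤ 2 := by
    refine (norm_sub_le _ _).trans ?_
    rw [hw1]; norm_num
  have e : Complex.exp ((w - 1) * (∑ p ∈ P k, 1 / (p:ℝ) : ℝ)) =
      ∏ p ∈ P k, Complex.exp ((w - 1) / p) := by
    rw [← Complex.exp_sum]
    congr 1
    push_cast
    rw [mul_sum]
    simp [div_eq_mul_inv]
  rw [e]
  have hre : (w - 1).re ≤ 0 := by
    have := Complex.re_le_norm w
    simp only [Complex.sub_re, Complex.one_re]; linarith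
  refine (prod_close _ _ _ (fun p hp => ?_) (fun p hp => ?_)).trans ?_
  · have hp1 : (1:ℝ) ≤ p := by exact_mod_cast (mem_P.1 hp).2.one_le
    have e : 1 + (w - 1) / p = ((1 - 1 / (p:ℝ) : ℝ) : ℂ) + w * ((1 / (p:ℝ) : ℝ) : ℂ) := by
      push_cast; ring
    have h2 : 1 / (p:ℝ) ≤ 1 := by rw [div_le_one (by linarith)]; exact hp1
    rw [e]
    refine (norm_add_le _ _).trans ?_
    rw [norm_mul, hw1, Complex.norm_real, Complex.norm_real, Real.norm_of_nonneg (by linarith),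
      Real.norm_of_nonneg (by positivity)]
    linarith
  · rw [Complex.norm_exp, Real.exp_le_one_iff, Complex.div_natCast_re]
    exact div_nonpos_of_nonpos_of_nonneg hre (by positivity)
  · calc _ ≤ ∑ p ∈ P k, θ ^ 2 * (1 / ((p:ℝ) * (p - 1))) := by
          refine sum_le_sum fun p hp => ?_
          have hp2 : (2:ℝ) ≤ p := by exact_mod_cast (mem_P.1 hp).2.two_le
          have hn : ‖(w - 1) / p‖ = ‖w - 1‖ / p := by simp
          have h1 := Complex.norm_exp_sub_one_sub_id_le (x := (w - 1) / p) (by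
            rw [hn, div_le_one (by linarith)]; linarith)
          rw [norm_sub_rev, ← sub_sub]
          refine h1.trans ?_
          rw [hn, div_pow]
          have h3 : ‖w - 1‖ ^ 2 ≤ θ ^ 2 := by
            rw [← sq_abs θ]; gcongr
          rw [← div_eq_mul_one_div]
          have : (0:ℝ) < p * (p - 1) := by nlinarith
          gcongr
          nlinarith
      _ = θ ^ 2 * ∑ p ∈ P k, (1 / ((p:ℝ) * (p - 1))) := by rw [mul_sum]
      _ ≤ _ := by have := h k; rw [mul_comm C]; gcongr

lemma tend_sqrt : Tendsto (fun L : ℝ => (√L)⁻¹) atTop (nhds 0) :=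
  tendsto_inv_atTop_zero.comp Real.tendsto_sqrt_atTop

lemma tend_log_sqrt : Tendsto (fun L : ℝ => Real.log L * (√L)⁻¹) atTop (nhds 0) := by
  have := (isLittleO_log_rpow_atTop (r := 1/2) (by norm_num)).tendsto_div_nhds_zero
  refine this.congr fun L => ?_
  rw [Real.sqrt_eq_rpow, div_eq_mul_inv]

lemma tend_g1 (t c : ℝ) : Tendsto (fun L : ℝ => |t| / √L * (Real.log L + c)) atTop (nhds 0) := by
  have := (tend_log_sqrt.const_mul |t|).add (tend_sqrt.const_mul (|t| * c))
  simp only [mul_zero, add_zero] at this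
  refine this.congr fun L => ?_
  ring

lemma tend_g2 (t c : ℝ) :
    Tendsto (fun L : ℝ => Real.exp (-L + |t| / √L * (Real.exp 1 * (L + c)))) atTop (nhds 0) := by
  refine Real.tendsto_exp_atBot.comp ?_
  have h1 : Tendsto (fun L : ℝ => -√L + |t| * Real.exp 1) atTop atBot :=
    (tendsto_neg_atTop_atBot.comp Real.tendsto_sqrt_atTop).atBot_add tendsto_const_nhds
  have h2 := (h1.atBot_mul_atTop₀ Real.tendsto_sqrt_atTop).atBot_add
    (tend_sqrt.const_mul (|t| * Real.exp 1 * c))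
  refine h2.congr' ?_
  filter_upwards [eventually_gt_atTop 0] with L hL
  have hs : √L * √L = L := Real.mul_self_sqrt hL.le
  have hs0 : 0 < √L := Real.sqrt_pos.2 hL
  field_simp
  linear_combination (-√L + |t| * Real.exp 1) * hs

lemma tend_g3 (t c : ℝ) : Tendsto (fun L : ℝ => c * (t / √L) ^ 2) atTop (nhds 0) := by
  have := ((tend_sqrt.const_mul t).pow 2).const_mul c
  simpa [div_eq_mul_inv] using this

lemma tend_g4 (t : ℝ) : Tendsto (fun L : ℝ => |t| ^ 3 / √L * Real.exp (|t| / √L)) atTop (nhds 0) := by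
  have h := tend_sqrt.const_mul (|t| ^ 3)
  have h2 := (Real.continuous_exp.tendsto _).comp (tend_sqrt.const_mul |t|)
  simpa [div_eq_mul_inv] using h.mul h2

lemma tend_L : Tendsto (fun n : ℕ => Real.log (Real.log n)) atTop atTop :=
  Real.tendsto_log_atTop.comp (Real.tendsto_log_atTop.comp tendsto_natCast_atTop_atTop)

/-- Truncation level. -/
noncomputable def kk (n : ℕ) : ℕ := ⌊Real.exp (Real.log n / Real.log (Real.log n))⌋₊

lemma taylor_part {t L : ℝ} (hL : 0 < L) :
    ‖(L:ℂ) * (Complex.exp (Complex.I * (t / √L : ℝ)) - 1 - Complex.I * (t / √L : ℝ)) + (t:ℂ) ^ 2 / 2‖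
      ≤ |t| ^ 3 / √L * Real.exp (|t| / √L) := by
  have hs0 : 0 < √L := Real.sqrt_pos.2 hL
  have hs : √L ^ 2 = L := Real.sq_sqrt hL.le
  have h := Complex.norm_exp_sub_sum_le_norm_mul_exp (Complex.I * (t / √L : ℝ)) 3
  have hn : ‖Complex.I * ((t / √L : ℝ) : ℂ)‖ = |t| / √L := by
    rw [norm_mul, Complex.norm_I, one_mul, Complex.norm_real, Real.norm_eq_abs, abs_div,
      abs_of_pos hs0]
  rw [hn] at h
  have e : (L:ℂ) * (Complex.exp (Complex.I * (t / √L : ℝ)) - 1 - Complex.I * (t / √L : ℝ)) +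
      (t:ℂ) ^ 2 / 2 = (L:ℂ) * (Complex.exp (Complex.I * (t / √L : ℝ)) -
        ∑ m ∈ range 3, (Complex.I * (t / √L : ℝ)) ^ m / m.factorial) := by
    have : (L:ℂ) * ((t / √L : ℝ) : ℂ) ^ 2 = (t:ℂ) ^ 2 := by
      rw [← Complex.ofReal_pow, ← Complex.ofReal_mul, div_pow, hs, mul_div_cancel₀ _ hL.ne']
      push_cast; rfl
    simp only [sum_range_succ, range_zero, sum_empty, Nat.factorial]
    push_cast [mul_pow, Complex.I_sq] at this ⊢
    linear_combination (-1/2) * this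
  rw [e, norm_mul, Complex.norm_real, Real.norm_of_nonneg hL.le]
  calc _ ≤ L * ((|t| / √L) ^ 3 * Real.exp (|t| / √L)) := by gcongr
    _ = _ := by
      rw [div_pow]
      have : √L ^ 3 = L * √L := by rw [← hs]; simp; ring
      rw [this]
      field_simp

lemma exp_I_lip (a b : ℝ) :
    ‖Complex.exp (Complex.I * a) - Complex.exp (Complex.I * b)‖ ≤ |a - b| := by
  have e : Complex.exp (Complex.I * a) - Complex.exp (Complex.I * b) =
      Complex.exp (b * Complex.I) * (Complex.exp (Complex.I * (a - b : ℝ)) - 1) := by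
    rw [mul_sub, ← Complex.exp_add, mul_one, mul_comm (b:ℂ)]
    congr 2
    push_cast; ring
  rw [e, norm_mul, Complex.norm_exp_ofReal_mul_I, one_mul]
  exact Real.norm_exp_I_mul_ofReal_sub_one_le

/-- All number-theoretic input needed. -/
lemma eventual_facts : ∃ C : ℝ, 0 ≤ C ∧ ∀ᶠ n : ℕ in atTop,
    1 ≤ Real.log (Real.log n) ∧
    |∑ p ∈ P (kk n), 1 / (p:ℝ) - Real.log (Real.log n)| ≤ Real.log (Real.log (Real.log n)) + C ∧
    ∑ p ∈ P (kk n), 1 / (p:ℝ) ≤ Real.log (Real.log n) + C ∧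
    (∑ m ∈ Icc 1 n, ((m.primeFactorsList.length : ℝ) - om (kk n) m)) / n ≤
      Real.log (Real.log (Real.log n)) + C ∧
    ∀ z : ℂ, ‖(∑ m ∈ Icc 1 n, (1 + z) ^ om (kk n) m) / n - ∏ p ∈ P (kk n), (1 + z / p)‖ ≤
      Real.exp (- Real.log (Real.log n) +
        ‖z‖ * (Real.exp 1 * ∑ p ∈ P (kk n), 1 / (p:ℝ))) := by
  obtain ⟨C, hC, hM⟩ := mertens_real
  obtain ⟨C2, hC2, hD⟩ := mean_diff
  refine ⟨2 * C + C2, by positivity, ?_⟩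
  filter_upwards [tend_L.eventually_ge_atTop 1, eventually_ge_atTop 2] with n hL hn
  have hn' : (2:ℝ) ≤ n := by exact_mod_cast hn
  have hln : 0 < Real.log n := Real.log_pos (by linarith)
  have hexp : Real.exp (Real.log (Real.log n)) = Real.log n := Real.exp_log hln
  set L := Real.log (Real.log n) with hLdef
  set y := Real.exp (Real.log n / L) with hy
  have hkk : kk n = ⌊y⌋₊ := rfl
  have hlogy : Real.log y = Real.log n / L := Real.log_exp _
  have hL0 : 0 < L := by linarith
  have hlogy1 : 1 ≤ Real.log n / L := by
    rw [le_div_iff₀ hL0, one_mul, ← hexp]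
    linarith [Real.add_one_le_exp L]
  have hy2 : 2 ≤ y := by
    have : Real.exp 1 ≤ y := Real.exp_le_exp.2 hlogy1
    linarith [Real.add_one_le_exp 1]
  have hyn : y ≤ n := by
    calc y ≤ Real.exp (Real.log n) := Real.exp_le_exp.2 (div_le_self hln.le hL)
      _ = n := Real.exp_log (by linarith)
  have hkn : kk n ≤ n := by rw [hkk]; exact Nat.floor_le_of_le hyn
  have hlly : Real.log (Real.log y) = L - Real.log L := by
    rw [hlogy, Real.log_div hln.ne' hL0.ne']
  have hlL : 0 ≤ Real.log L := Real.log_nonneg hL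
  have m1 := hM y hy2
  have m2 := hM n hn'
  rw [Nat.floor_natCast] at m2
  rw [hlly, ← hkk] at m1
  have d := hD n (kk n) hkn
  refine ⟨hL, ?_, ?_, ?_, ?_⟩
  · rw [abs_le] at *
    constructor <;> linarith [m1.1, m1.2]
  · rw [abs_le] at m1
    linarith [m1.2]
  · rw [div_le_iff₀ (by linarith), mul_comm]
    refine d.trans ?_
    refine mul_le_mul_of_nonneg_left ?_ (by positivity)
    rw [abs_le] at m1 m2
    linarith [m1.1, m2.2]
  · intro z
    have hδ0 : 0 ≤ L / Real.log n := by positivity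
    have hδ1 : L / Real.log n ≤ 1 := by
      rw [div_le_one hln, ← hexp]; linarith [Real.add_one_le_exp L]
    have hs := sieve (n := n) (by omega) (Q := P (kk n)) (fun p hp => (mem_P.1 hp).2) z hδ0 hδ1
    simp only [prod_om] at hs
    refine hs.trans ?_
    have e1 : (n:ℝ) ^ (-(L / Real.log n)) = Real.exp (-L) := by
      rw [Real.rpow_def_of_pos (by linarith)]
      congr 1
      field_simp
    rw [e1, Real.exp_add, mul_sum, mul_sum, Real.exp_sum]
    gcongr with p hp
    have hp1 : (1:ℝ) ≤ p := by exact_mod_cast (mem_P.1 hp).2.one_le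
    have hpy : (p:ℝ) ≤ y := by
      have := (mem_P.1 hp).1
      rw [hkk] at this
      exact (Nat.cast_le.2 this).trans (Nat.floor_le (by linarith))
    have e2 : (p:ℝ) ^ (L / Real.log n) ≤ Real.exp 1 := by
      rw [Real.rpow_def_of_pos (by linarith)]
      apply Real.exp_le_exp.2
      have := Real.log_le_log (by linarith) hpy
      rw [hlogy] at this
      calc Real.log p * (L / Real.log n) ≤ Real.log n / L * (L / Real.log n) := by gcongr
        _ = 1 := by field_simp
    calc 1 + ‖z‖ * ((p:ℝ) ^ (L / Real.log n) / p) ≤ 1 + ‖z‖ * (Real.exp 1 / p) := by gcongr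
      _ ≤ Real.exp (‖z‖ * (Real.exp 1 / p)) := by linarith [Real.add_one_le_exp (‖z‖ * (Real.exp 1 / p))]
      _ = _ := by ring_nf

lemma charfun_tendsto (t : ℝ) :
    Tendsto (fun n : ℕ => (∑ m ∈ Icc 1 n, Complex.exp (Complex.I *
      (t * (((m.primeFactorsList.length : ℝ) - Real.log (Real.log n)) /
        √(Real.log (Real.log n))) : ℝ))) / n) atTop (nhds (Complex.exp (-(t:ℂ) ^ 2 / 2))) := by
  obtain ⟨C, hC, hF⟩ := eventual_facts
  obtain ⟨C3, hC3, hP⟩ := prod_exp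
  -- the main exponent
  set X : ℕ → ℂ := fun n => (Complex.exp (Complex.I * (t / √(Real.log (Real.log n)) : ℝ)) - 1) *
      (∑ p ∈ P (kk n), 1 / (p:ℝ) : ℝ) - Complex.I * (t * √(Real.log (Real.log n)) : ℝ) with hX
  have hXlim : Tendsto X atTop (nhds (-(t:ℂ) ^ 2 / 2)) := by
    rw [tendsto_iff_norm_sub_tendsto_zero]
    have hb := ((tend_g1 t C).add (tend_g4 t)).comp tend_L
    rw [add_zero] at hb
    refine squeeze_zero' (Eventually.of_forall fun n => norm_nonneg _) ?_ hb
    filter_upwards [hF] with n hn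
    obtain ⟨hL, hA, -, -, -⟩ := hn
    simp only [hX, Function.comp]
    set L := Real.log (Real.log n)
    set A := ∑ p ∈ P (kk n), 1 / (p:ℝ)
    have hL0 : 0 < L := by linarith
    have hs0 : 0 < √L := Real.sqrt_pos.2 hL0
    have hs : √L * √L = L := Real.mul_self_sqrt hL0.le
    have h1 := taylor_part (t := t) hL0
    have hz : ‖Complex.exp (Complex.I * (t / √L : ℝ)) - 1‖ ≤ |t| / √L := by
      refine Real.norm_exp_I_mul_ofReal_sub_one_le.trans ?_
      rw [Real.norm_eq_abs, abs_div, abs_of_pos hs0]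
    have e0 : (L:ℂ) * (t / √L : ℝ) = (t * √L : ℝ) := by
      rw [← Complex.ofReal_mul]
      congr 1
      field_simp
      linear_combination (-t) * hs
    have e : (Complex.exp (Complex.I * (t / √L : ℝ)) - 1) * (A : ℂ) - Complex.I * (t * √L : ℝ) -
        -(t:ℂ) ^ 2 / 2 = (Complex.exp (Complex.I * (t / √L : ℝ)) - 1) * ((A - L : ℝ) : ℂ) +
        ((L:ℂ) * (Complex.exp (Complex.I * (t / √L : ℝ)) - 1 - Complex.I * (t / √L : ℝ)) +
          (t:ℂ) ^ 2 / 2) := by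
      rw [Complex.ofReal_sub]
      linear_combination Complex.I * e0
    rw [e]
    refine (norm_add_le _ _).trans (add_le_add ?_ h1)
    rw [norm_mul, Complex.norm_real, Real.norm_eq_abs]
    gcongr
  have hElim := (Complex.continuous_exp.tendsto _).comp hXlim
  rw [← zero_add (Complex.exp (-(t:ℂ) ^ 2 / 2))]
  rw [← zero_add (Complex.exp (-(t:ℂ) ^ 2 / 2))] at *
  suffices hd : Tendsto (fun n : ℕ => (∑ m ∈ Icc 1 n, Complex.exp (Complex.I *
      (t * (((m.primeFactorsList.length : ℝ) - Real.log (Real.log n)) /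
        √(Real.log (Real.log n))) : ℝ))) / n - Complex.exp (X n)) atTop (nhds 0) by
    have := hd.add hElim
    simpa using this
  have hb := ((tend_g1 t C).add ((tend_g2 t C).add (tend_g3 t C3))).comp tend_L
  rw [add_zero, add_zero] at hb
  refine squeeze_zero_norm' ?_ hb
  filter_upwards [hF, eventually_ge_atTop 1] with n hn hn1
  obtain ⟨hL, hA, hA2, hMD, hS⟩ := hn
  simp only [hX, Function.comp]
  have hn0 : (0:ℝ) < n := by exact_mod_cast hn1
  set L := Real.log (Real.log n)
  set A := ∑ p ∈ P (kk n), 1 / (p:ℝ)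
  have hL0 : 0 < L := by linarith
  have hs0 : 0 < √L := Real.sqrt_pos.2 hL0
  have hs : √L * √L = L := Real.mul_self_sqrt hL0.le
  set w := Complex.exp (Complex.I * (t / √L : ℝ)) with hw
  have hz : ‖w - 1‖ ≤ |t| / √L := by
    refine Real.norm_exp_I_mul_ofReal_sub_one_le.trans ?_
    rw [Real.norm_eq_abs, abs_div, abs_of_pos hs0]
  have hS := hS (w - 1)
  have hP := hP (kk n) (t / √L)
  rw [← hw] at hP
  set Pr := ∏ p ∈ P (kk n), (1 + (w - 1) / (p:ℂ))
  set v := Complex.exp (-(Complex.I * (t * √L : ℝ))) with hv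
  have hv1 : ‖v‖ = 1 := by
    rw [hv, show -(Complex.I * ((t * √L : ℝ):ℂ)) = ((-(t * √L) : ℝ) : ℂ) * Complex.I by
      push_cast; ring]
    exact Complex.norm_exp_ofReal_mul_I _
  have e1 : ∀ m : ℕ, Complex.exp (Complex.I * (t * (((om (kk n) m : ℝ) - L) / √L) : ℝ)) =
      (1 + (w - 1)) ^ om (kk n) m * v := by
    intro m
    rw [add_sub_cancel, hw, hv, ← Complex.exp_nat_mul, ← Complex.exp_add]
    congr 1
    have : t * (((om (kk n) m : ℝ) - L) / √L) = (om (kk n) m : ℝ) * (t / √L) - t * √L := by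
      field_simp
      linear_combination t * hs
    rw [this]
    push_cast
    ring
  set S1 := ∑ m ∈ Icc 1 n, Complex.exp (Complex.I *
      (t * (((m.primeFactorsList.length : ℝ) - L) / √L) : ℝ)) with hS1
  set S2 := ∑ m ∈ Icc 1 n, (1 + (w - 1)) ^ om (kk n) m with hS2
  have b1 : ‖S1 / n - S2 / n * v‖ ≤ |t| / √L * (Real.log L + C) := by
    have : S1 / n - S2 / n * v = (∑ m ∈ Icc 1 n, (Complex.exp (Complex.I *
      (t * (((m.primeFactorsList.length : ℝ) - L) / √L) : ℝ)) -
        Complex.exp (Complex.I * (t * (((om (kk n) m : ℝ) - L) / √L) : ℝ)))) / n := by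
      rw [sum_sub_distrib, ← hS1]
      simp only [e1]
      rw [← sum_mul, ← hS2]
      ring
    rw [this, norm_div, Complex.norm_natCast]
    calc _ ≤ (|t| / √L * ∑ m ∈ Icc 1 n, ((m.primeFactorsList.length : ℝ) - om (kk n) m)) / n := by
          gcongr
          rw [mul_sum]
          refine (norm_sum_le _ _).trans (sum_le_sum fun m hm => ?_)
          refine (exp_I_lip _ _).trans (le_of_eq ?_)
          rw [mem_Icc] at hm
          have hle : (om (kk n) m : ℝ) ≤ m.primeFactorsList.length := by
            exact_mod_cast om_le (by omega)
          rw [show t * (((m.primeFactorsList.length : ℝ) - L) / √L) -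
            t * (((om (kk n) m : ℝ) - L) / √L) =
            t / √L * ((m.primeFactorsList.length : ℝ) - om (kk n) m) by ring]
          rw [abs_mul, abs_div, abs_of_pos hs0, abs_of_nonneg (sub_nonneg.2 hle)]
      _ = |t| / √L * ((∑ m ∈ Icc 1 n, ((m.primeFactorsList.length : ℝ) - om (kk n) m)) / n) := by ring
      _ ≤ _ := by gcongr
  have b2 : ‖S2 / n - Pr‖ ≤ Real.exp (-L + |t| / √L * (Real.exp 1 * (L + C))) := by
    refine hS.trans ?_
    have hA0 : 0 ≤ A := sum_nonneg fun p _ => by positivity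
    gcongr
  have e2 : Complex.exp ((w - 1) * (A:ℂ) - Complex.I * (t * √L : ℝ)) =
      Complex.exp ((w - 1) * (A:ℂ)) * v := by
    rw [hv, ← Complex.exp_add, sub_eq_add_neg]
  rw [e2]
  have e3 : S1 / n - Complex.exp ((w - 1) * (A:ℂ)) * v = (S1 / n - S2 / n * v) +
      ((S2 / n - Pr) * v + (Pr - Complex.exp ((w - 1) * (A:ℂ))) * v) := by ring
  rw [e3]
  refine (norm_add_le _ _).trans (add_le_add b1 ((norm_add_le _ _).trans (add_le_add ?_ ?_)))
  · rw [norm_mul, hv1, mul_one]; exact b2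
  · rw [norm_mul, hv1, mul_one]; exact hP

open MeasureTheory ProbabilityTheory

/-- Uniform measure on the values `f m`, `1 ≤ m ≤ n + 1`. -/
noncomputable def emp (n : ℕ) (f : ℕ → ℝ) : Measure ℝ :=
  ((n + 1 : ℕ) : ENNReal)⁻¹ • ∑ m ∈ Icc 1 (n + 1), Measure.dirac (f m)

instance emp_prob (n : ℕ) (f : ℕ → ℝ) : IsProbabilityMeasure (emp n f) := by
  constructor
  simp only [emp, Measure.smul_apply, Measure.finsetSum_apply, measure_univ, smul_eq_mul, sum_const,
    Nat.card_Icc, nsmul_eq_mul, mul_one, add_tsub_cancel_right]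
  exact ENNReal.inv_mul_cancel (by simp) (by simp)

lemma emp_charFun (n : ℕ) (f : ℕ → ℝ) (t : ℝ) :
    charFun (emp n f) t =
      (∑ m ∈ Icc 1 (n + 1), Complex.exp (Complex.I * (t * f m : ℝ))) / (n + 1 : ℕ) := by
  rw [charFun_apply_real, emp, integral_smul_measure, integral_finsetSum_measure]
  · simp only [integral_dirac]
    rw [ENNReal.toReal_inv, ENNReal.toReal_natCast, Complex.real_smul, div_eq_inv_mul]
    push_cast
    congr 1
    refine sum_congr rfl fun m _ => ?_
    congr 1
    ring
  · intro m _
    exact integrable_dirac (by simp)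

lemma emp_Iic (n : ℕ) (f : ℕ → ℝ) (x : ℝ) :
    (emp n f).real (Set.Iic x) = ((Icc 1 (n + 1)).filter (fun m => f m ≤ x)).card / (n + 1 : ℕ) := by
  rw [measureReal_def, emp, Measure.smul_apply, Measure.finsetSum_apply]
  simp only [Measure.dirac_apply' _ measurableSet_Iic, Set.indicator_apply, Set.mem_Iic, Pi.one_apply]
  rw [sum_boole, smul_eq_mul, ENNReal.toReal_mul, ENNReal.toReal_inv, ENNReal.toReal_natCast,
    ENNReal.toReal_natCast, div_eq_inv_mul]

lemma gauss_Iic (x : ℝ) : (gaussianReal 0 1).real (Set.Iic x) =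
    (√(2 * Real.pi))⁻¹ * ∫ t in Set.Iic x, Real.exp (-t ^ 2 / 2) := by
  rw [measureReal_def, gaussianReal_apply_eq_integral _ one_ne_zero, ENNReal.toReal_ofReal
    (integral_nonneg fun t => gaussianPDFReal_nonneg _ _ _), ← integral_const_mul]
  simp [gaussianPDFReal]

/-- The empirical measure, bundled. -/
noncomputable def empP (n : ℕ) (f : ℕ → ℝ) : ProbabilityMeasure ℝ := ⟨emp n f, inferInstance⟩

/-- The standard Gaussian, bundled. -/
noncomputable def gaussP : ProbabilityMeasure ℝ := ⟨gaussianReal 0 1, inferInstance⟩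

theorem main (x : ℝ) :
    Tendsto (fun n : ℕ => (((Icc 1 n).filter (fun m : ℕ =>
        ((m.primeFactorsList.length : ℝ) - Real.log (Real.log n)) / √(Real.log (Real.log n))
          ≤ x)).card : ℝ) / n) atTop
      (nhds ((√(2 * Real.pi))⁻¹ * ∫ t in Set.Iic x, Real.exp (-t ^ 2 / 2))) := by
  set f : ℕ → ℕ → ℝ := fun n m => ((m.primeFactorsList.length : ℝ) - Real.log (Real.log n)) /
    √(Real.log (Real.log n)) with hf
  have h : Tendsto (fun n => empP n (f (n + 1))) atTop
      (nhds gaussP) := by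
    rw [ProbabilityMeasure.tendsto_iff_tendsto_charFun]
    intro t
    have := (charfun_tendsto t).comp (tendsto_add_atTop_nat 1)
    simp only [empP, gaussP, ProbabilityMeasure.coe_mk, charFun_gaussianReal, emp_charFun]
    convert this using 2
    congr 1
    simp
    ring
  have h2 := ProbabilityMeasure.tendsto_measure_of_null_frontier_of_tendsto' h (E := Set.Iic x) (by
    rw [frontier_Iic]
    have := nullSingletonClass_gaussianReal (μ := 0) (v := 1) one_ne_zero
    exact measure_singleton (μ := gaussianReal 0 1) x)
  have h3 := (ENNReal.tendsto_toReal (measure_ne_top _ _)).comp h2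
  rw [← gauss_Iic, ← tendsto_add_atTop_iff_nat 1]
  refine h3.congr fun n => ?_
  exact emp_Iic n (f (n + 1)) x

end EK

open Filter MeasureTheory
open scoped Classical

/-- The standard normal cumulative distribution function. -/
noncomputable def stdNormalCDF (x : ℝ) : ℝ :=
  (Real.sqrt (2 * Real.pi))⁻¹ * ∫ t in Set.Iic x, Real.exp (-t ^ 2 / 2)

/-- Erdős–Kac theorem for `Ω`, the number of prime divisors counted with
multiplicity: the proportion of `m ≤ n` with
`Ω(m) - ln ln n ≤ x·√(ln ln n)` tends to `Φ(x)`. -/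
theorem erdos_kac_bigOmega (x : ℝ) :
    Tendsto
      (fun n : ℕ =>
        (((Finset.Icc 1 n).filter (fun m =>
            (m.primeFactorsList.length : ℝ) - Real.log (Real.log n) ≤
              x * Real.sqrt (Real.log (Real.log n)))).card : ℝ) / n)
      atTop (nhds (stdNormalCDF x)) := by
  refine (EK.main x).congr' ?_
  filter_upwards [EK.tend_L.eventually_gt_atTop 0] with n hn
  have hs : 0 < √(Real.log (Real.log n)) := Real.sqrt_pos.2 hn
  congr 3
  ext m
  simp only [Finset.mem_filter, div_le_iff₀ hs]
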